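/- arXiv:1111.2901 — 2 statements merged into one kernel-verified Lean document; each statement's English description precedes it below -/
import Mathlib

section
/- Let A be a left self-injective semiprimary ring and S a simple left A-module. Then Hom_A(S, A) is a simple right A-module; moreover it is generated as a right A-module by any of its nonzero elements. -/
universe u v

open Cardinal

/-- A ring is *semiprimary* if its Jacobson radical `J` is nilpotent
(`J ^ n = 0`, expressed elementwise: every product of `n` elements of `J` vanishes)
and the quotient ring `A / J` is a semisimple ring. -/
def IsSemiprimary (A : Type*) [Ring A] : Prop :=
  IsSemisimpleRing (RingCon.Quotient (⊥ : TwoSidedIdeal A).jacobson.ringCon) ∧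
  ∃ n : ℕ, 0 < n ∧ ∀ f : Fin n → A,
    (∀ i, f i ∈ Ideal.jacobson (⊥ : Ideal A)) → (List.ofFn f).prod = 0

/-- A ring is *quasi-Frobenius* if it is left self-injective and left artinian. -/
def IsQuasiFrobenius (A : Type*) [Ring A] : Prop :=
  Module.Injective A A ∧ IsArtinianRing A

/-!
By self-injectivity, every map `M → A` factors through any injective map `M → A` via a right
multiplication. An injective and a nonzero map out of a simple module are the same thing, so
`Hom(S, A)` is zero or simple, and only its being nonzero is at stake.

Write `J` for the Jacobson radical. Maps from simple modules to `A` are killed by `J` acting on the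
right, and conversely an element acting as zero on all minimal left ideals from the right lies in
`J`. So for each isotypic component `c` of `A / J` there is a minimal left ideal `T c` on which `c`
acts nontrivially from the right. Distinct components annihilate each other, so the isomorphism
class of `T c` determines `c`. There are only finitely many components, and they correspond to the
simple modules, so by pigeonhole every simple module is isomorphic to some `T c`.
-/

section JacobsonRadical

variable {A M : Type*} [Ring A] [AddCommGroup M] [Module A M]

theorem mem_ringJacobson_iff_forall_exists_mul_eq_one {x : A} :
    x ∈ Ring.jacobson A ↔ ∀ r, ∃ c, (1 + x * r) * c = 1 := by
  constructor
  · intro hx r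
    have leftInverse (j : A) (hj : j ∈ Ring.jacobson A) : ∃ c, c * (1 + j) = 1 := by
      rw [← Ideal.jacobson_bot] at hj
      simpa [sub_eq_zero, add_comm] using Ideal.exists_mul_add_sub_mem_of_mem_jacobson j hj
    have hxr : x * r ∈ Ring.jacobson A := Ideal.mul_mem_right r _ hx
    obtain ⟨c, hc⟩ := leftInverse (x * r) hxr
    obtain ⟨d, hd⟩ := leftInverse (-(c * (x * r))) (neg_mem (Ideal.mul_mem_left _ c hxr))
    have hc' : 1 + -(c * (x * r)) = c := by rw [← hc]; noncomm_ring
    rw [hc'] at hd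
    exact ⟨c, left_inv_eq_right_inv hd hc ▸ hd⟩
  · intro h
    rw [← Ideal.jacobson_bot, Ideal.mem_jacobson_iff]
    intro y
    obtain ⟨c, hc⟩ := h y
    obtain ⟨d, hd⟩ := h (-(y * c))
    have hc' : 1 + x * -(y * c) = c := by rw [← hc]; noncomm_ring
    rw [hc'] at hd
    have hcx : c * (1 + x * y) = 1 := left_inv_eq_right_inv hc hd ▸ hd
    refine ⟨1 - y * c * x, (Submodule.mem_bot A).2 ?_⟩
    calc (1 - y * c * x) * y * x + (1 - y * c * x) - 1
        = y * (1 - c * (1 + x * y)) * x := by noncomm_ring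
      _ = 0 := by rw [hcx, sub_self, mul_zero, zero_mul]

theorem isSemisimpleModule_of_isTorsionBySet {I : Ideal A} [I.IsTwoSided]
    [IsSemisimpleRing (A ⧸ I)] (h : Module.IsTorsionBySet A M I) : IsSemisimpleModule A M :=
  letI := h.module
  h.isSemisimpleModule_iff.1 inferInstance

instance isSemisimpleModule_quotient (I : Ideal A) [I.IsTwoSided] [IsSemisimpleRing (A ⧸ I)] :
    IsSemisimpleModule A (A ⧸ I) :=
  isSemisimpleModule_of_isTorsionBySet (Module.isTorsionBySet_quotient_iff _ _ |>.2
    fun a _ hr ↦ Ideal.mul_mem_right a I hr)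

end JacobsonRadical

section Semiprimary

variable {A M : Type*} [Ring A] [AddCommGroup M] [Module A M]

theorem exists_isAtom_le_of_jacobson_pow_smul_eq_bot [IsSemisimpleRing (A ⧸ Ring.jacobson A)]
    (n : ℕ) {N : Submodule A M} (hN : N ≠ ⊥) (hn : Ring.jacobson A ^ n • N = ⊥) :
    ∃ T, IsAtom T ∧ T ≤ N := by
  induction n generalizing N with
  | zero => exact absurd (by rwa [Submodule.pow_zero, Submodule.one_smul] at hn) hN
  | succ n ih =>
    by_cases hJN : Ring.jacobson A • N = ⊥
    · have htorsion : Module.IsTorsionBySet A N (Ring.jacobson A : Set A) := fun y j ↦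
        Subtype.ext <| (Submodule.mem_bot A).1 <| hJN ▸ Submodule.smul_mem_smul j.2 y.2
      have := isSemisimpleModule_of_isTorsionBySet htorsion
      obtain ⟨T, hTN, hT⟩ := (IsSemisimpleModule.eq_bot_or_exists_simple_le N).resolve_left hN
      exact ⟨T, isSimpleModule_iff_isAtom.1 hT, hTN⟩
    · rw [Submodule.pow_succ, Submodule.mul_smul] at hn
      obtain ⟨T, hT, hTN⟩ := ih hJN hn
      exact ⟨T, hT, hTN.trans Submodule.smul_le_right⟩

instance isAtomic_submodule_of_isSemiprimaryRing [IsSemiprimaryRing A] :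
    IsAtomic (Submodule A M) where
  eq_bot_or_exists_atom_le N := by
    obtain ⟨n, hn⟩ := IsSemiprimaryRing.isNilpotent (R := A)
    refine or_iff_not_imp_left.2 fun hN ↦ exists_isAtom_le_of_jacobson_pow_smul_eq_bot n hN ?_
    rw [hn, Submodule.zero_eq_bot, Submodule.bot_smul]

theorem mul_eq_zero_of_mem_pow {I : Ideal A} {n : ℕ} {z : A}
    (h : ∀ f : Fin n → A, (∀ i, f i ∈ I) → (List.ofFn f).prod * z = 0) {y : A} (hy : y ∈ I ^ n) :
    y * z = 0 := by
  induction n generalizing y z with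
  | zero =>
    have hz : z = 0 := by simpa using h Fin.elim0 fun i ↦ i.elim0
    rw [hz, mul_zero]
  | succ n ih =>
    rw [Submodule.pow_succ] at hy
    induction hy using Submodule.mul_induction_on' with
    | mem_mul_mem a ha b hb =>
      rw [mul_assoc]
      refine ih (fun f hf ↦ ?_) ha
      have hsnoc := h (Fin.snoc f b) (Fin.lastCases (by simpa using hb) (by simpa using hf))
      rw [List.ofFn_succ'] at hsnoc
      simpa [mul_assoc] using hsnoc
    | add a _ b _ ha hb => rw [add_mul, ha, hb, add_zero]

theorem IsSemiprimary.isSemiprimaryRing (h : IsSemiprimary A) : IsSemiprimaryRing A where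
  isSemisimpleRing := by
    have := h.1
    have hker : (⊥ : TwoSidedIdeal A).jacobson.ringCon ≤
        RingCon.ker (Ideal.Quotient.mk (Ring.jacobson A)) := by
      intro a b hab
      rw [RingCon.ker_apply, Ideal.Quotient.mk_eq_mk_iff_sub_mem, ← Ideal.jacobson_bot,
        Ideal.mem_jacobson_iff]
      simpa using TwoSidedIdeal.mem_jacobson_iff.1 ((TwoSidedIdeal.rel_iff _ _ _).1 hab)
    refine RingHom.isSemisimpleRing_of_surjective (RingCon.lift _ _ hker) fun y ↦ ?_
    obtain ⟨a, rfl⟩ := Ideal.Quotient.mk_surjective y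
    exact ⟨RingCon.mk' _ a, RingCon.lift_mk' hker a⟩
  isNilpotent := by
    obtain ⟨-, n, -, hn⟩ := h
    refine ⟨n, (Submodule.eq_bot_iff _).2 fun y hy ↦ ?_⟩
    rw [← mul_one y]
    refine mul_eq_zero_of_mem_pow (fun f hf ↦ ?_) hy
    rw [hn f (by simpa only [Ideal.jacobson_bot] using hf), zero_mul]

end Semiprimary

section IsotypicComponents

variable {A : Type*} [Ring A]

theorem mul_mem_of_mem_isotypicComponents {I : Ideal A} [I.IsTwoSided] {c d : Submodule A (A ⧸ I)}
    (hc : c ∈ isotypicComponents A (A ⧸ I)) (hd : d ∈ isotypicComponents A (A ⧸ I)) (hcd : c ≠ d)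
    {x y : A} (hx : Ideal.Quotient.mk I x ∈ c) (hy : Ideal.Quotient.mk I y ∈ d) : x * y ∈ I := by
  have hdisj : Disjoint c d := (sSupIndep_isotypicComponents A (A ⧸ I)).pairwiseDisjoint hc hd hcd
  let mulRight : Module.End A (A ⧸ I) :=
    (LinearMap.toSpanSingleton (A ⧸ I) (A ⧸ I) (Ideal.Quotient.mk I y)).restrictScalars A
  have hxy_c : Ideal.Quotient.mk I (x * y) ∈ c :=
    Submodule.IsFullyInvariant.of_mem_isotypicComponents hc mulRight hx
  have hxy_d : Ideal.Quotient.mk I (x * y) ∈ d := d.smul_mem x hy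
  exact Ideal.Quotient.eq_zero_iff_mem.1 (Submodule.disjoint_def.1 hdisj _ hxy_c hxy_d)

variable {M S T : Type*} [AddCommGroup M] [Module A M] [AddCommGroup S] [Module A S]
  [AddCommGroup T] [Module A T] [IsSimpleModule A S] [IsSimpleModule A T]

theorem nonempty_linearEquiv_of_isotypicComponent_eq {f : S →ₗ[A] M} (hf : f ≠ 0)
    (h : isotypicComponent A M S = isotypicComponent A M T) : Nonempty (S ≃ₗ[A] T) := by
  let e := LinearEquiv.ofInjective f (LinearMap.injective_of_ne_zero hf)
  have := IsSimpleModule.congr e.symm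
  have hle : LinearMap.range f ≤ isotypicComponent A M T := h ▸ le_sSup ⟨e.symm⟩
  obtain ⟨e'⟩ := isIsotypicOfType_submodule_iff.1 (.isotypicComponent A M T) _ hle
  exact ⟨e.trans e'⟩

variable (A S) in
theorem exists_linearMap_quotient_jacobson_ne_zero [IsSemisimpleRing (A ⧸ Ring.jacobson A)] :
    ∃ f : S →ₗ[A] A ⧸ Ring.jacobson A, f ≠ 0 := by
  have := IsSimpleModule.nontrivial A S
  obtain ⟨s, hs⟩ := exists_ne (0 : S)
  have hle : Ring.jacobson A ≤ LinearMap.ker (LinearMap.toSpanSingleton A S s) :=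
    IsSemisimpleModule.jacobson_le_ker A A A S _
  let q : (A ⧸ Ring.jacobson A) →ₗ[A] S := Submodule.liftQ _ (LinearMap.toSpanSingleton A S s) hle
  have hq : q ≠ 0 := fun h ↦ hs <| by
    simpa only [q, Submodule.liftQ_apply, LinearMap.toSpanSingleton_apply, one_smul,
      LinearMap.zero_apply] using LinearMap.congr_fun h (Submodule.Quotient.mk 1)
  obtain ⟨m, ⟨e⟩⟩ := LinearMap.linearEquiv_of_ne_zero hq
  refine ⟨m.subtype ∘ₗ e.toLinearMap, fun h ↦ hs ?_⟩
  simpa using LinearMap.congr_fun h s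

variable (A S) in
theorem isotypicComponent_quotient_jacobson_mem [IsSemisimpleRing (A ⧸ Ring.jacobson A)] :
    isotypicComponent A (A ⧸ Ring.jacobson A) S ∈
      isotypicComponents A (A ⧸ Ring.jacobson A) := by
  obtain ⟨f, hf⟩ := exists_linearMap_quotient_jacobson_ne_zero A S
  let e := LinearEquiv.ofInjective f (LinearMap.injective_of_ne_zero hf)
  exact ⟨LinearMap.range f, IsSimpleModule.congr e.symm, e.isotypicComponent_eq⟩

end IsotypicComponents

section SelfInjective

open MulOpposite

variable {A M S : Type*} [Ring A] [Module.Injective A A] [AddCommGroup M] [Module A M]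
  [AddCommGroup S] [Module A S] [IsSimpleModule A S]

theorem exists_op_smul_eq_of_injective {f : M →ₗ[A] A} (hf : Function.Injective f)
    (g : M →ₗ[A] A) : ∃ a : A, op a • f = g := by
  obtain ⟨h, rfl⟩ := Module.Injective.extension_property A A M A f hf g
  refine ⟨h 1, LinearMap.ext fun m ↦ ?_⟩
  simpa using (map_smul h (f m) 1).symm

theorem op_smul_eq_zero_of_mem_jacobson (f : S →ₗ[A] A) {x : A} (hx : x ∈ Ring.jacobson A) :
    op x • f = 0 := by
  by_contra hne
  obtain ⟨a, ha⟩ := exists_op_smul_eq_of_injective (LinearMap.injective_of_ne_zero hne) f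
  obtain ⟨c, hc⟩ := mem_ringJacobson_iff_forall_exists_mul_eq_one.1 hx (-a)
  refine hne (LinearMap.ext fun s ↦ ?_)
  have hfs : f s * x * a = f s := LinearMap.congr_fun ha s
  have hzero : f s * (1 + x * -a) = 0 := by
    rw [mul_add, mul_one, mul_neg, mul_neg, ← mul_assoc, hfs, add_neg_cancel]
  have hfs_zero : f s = 0 := by rw [← mul_one (f s), ← hc, ← mul_assoc, hzero, zero_mul]
  simp [hfs_zero]

theorem op_smul_eq_zero_of_forall_mul_mem_jacobson {f : S →ₗ[A] A} {x y : A} (hx : op x • f ≠ 0)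
    (hxy : ∀ a, x * a * y ∈ Ring.jacobson A) (g : S →ₗ[A] A) : op y • g = 0 := by
  obtain ⟨a, rfl⟩ := exists_op_smul_eq_of_injective (LinearMap.injective_of_ne_zero hx) g
  simpa [smul_smul, mul_assoc] using op_smul_eq_zero_of_mem_jacobson f (hxy a)

theorem eq_of_op_smul_ne_zero {c d : Submodule A (A ⧸ Ring.jacobson A)}
    (hc : c ∈ isotypicComponents A (A ⧸ Ring.jacobson A))
    (hd : d ∈ isotypicComponents A (A ⧸ Ring.jacobson A)) {x y : A}
    (hx : Ideal.Quotient.mk _ x ∈ c) (hy : Ideal.Quotient.mk _ y ∈ d) {f g : S →ₗ[A] A}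
    (hf : op x • f ≠ 0) (hg : op y • g ≠ 0) : c = d := by
  by_contra hcd
  refine hg (op_smul_eq_zero_of_forall_mul_mem_jacobson hf (fun a ↦ ?_) g)
  rw [mul_assoc]
  exact mul_mem_of_mem_isotypicComponents hc hd hcd hx (d.smul_mem a hy)

variable [IsAtomic (Ideal A)]

theorem mem_jacobson_of_forall_isAtom_mul_eq_zero {x : A}
    (h : ∀ T : Ideal A, IsAtom T → ∀ t ∈ T, t * x = 0) : x ∈ Ring.jacobson A := by
  rw [mem_ringJacobson_iff_forall_exists_mul_eq_one]
  intro r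
  let mulRight : A →ₗ[A] A := LinearMap.toSpanSingleton A A (1 + x * r)
  have hker : LinearMap.ker mulRight = ⊥ := by
    refine (eq_bot_or_exists_atom_le _).resolve_right ?_
    rintro ⟨T, hT, hTker⟩
    refine hT.1 ((Submodule.eq_bot_iff T).2 fun t ht ↦ ?_)
    have ht0 : t * (1 + x * r) = 0 := hTker ht
    simpa [mul_add, ← mul_assoc, h T hT t ht] using ht0
  obtain ⟨c, hc⟩ := exists_op_smul_eq_of_injective (LinearMap.ker_eq_bot.1 hker) LinearMap.id
  exact ⟨c, by simpa [mulRight, add_mul] using LinearMap.congr_fun hc 1⟩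

theorem exists_isSimpleModule_op_smul_subtype_ne_zero {c : Submodule A (A ⧸ Ring.jacobson A)}
    (hc : c ≠ ⊥) : ∃ T : Ideal A, IsSimpleModule A T ∧
      ∃ x : A, Ideal.Quotient.mk _ x ∈ c ∧ op x • T.subtype ≠ 0 := by
  obtain ⟨z, hz, hz0⟩ := c.ne_bot_iff.1 hc
  obtain ⟨x, rfl⟩ := Ideal.Quotient.mk_surjective z
  by_contra! hzero
  refine hz0 (Ideal.Quotient.eq_zero_iff_mem.2 ?_)
  refine mem_jacobson_of_forall_isAtom_mul_eq_zero fun T hT t ht ↦ ?_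
  exact LinearMap.congr_fun (hzero T (isSimpleModule_iff_isAtom.2 hT) x hz) ⟨t, ht⟩

variable (A S) in
theorem exists_linearMap_ne_zero_of_isSimpleModule [IsSemisimpleRing (A ⧸ Ring.jacobson A)] :
    ∃ f : S →ₗ[A] A, f ≠ 0 := by
  let C := isotypicComponents A (A ⧸ Ring.jacobson A)
  choose T hT x hx hxT using fun c : C ↦
    exists_isSimpleModule_op_smul_subtype_ne_zero (bot_lt_isotypicComponents c.2).ne'
  let σ (c : C) : C := ⟨_, isotypicComponent_quotient_jacobson_mem A (T c)⟩
  have hσ : Function.Injective σ := by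
    intro c d hcd
    obtain ⟨h, hh⟩ := exists_linearMap_quotient_jacobson_ne_zero A (T c)
    obtain ⟨e⟩ := nonempty_linearEquiv_of_isotypicComponent_eq hh (congrArg Subtype.val hcd)
    let g : T c →ₗ[A] A := (T d).subtype ∘ₗ e.toLinearMap
    have hg : op (x d) • g ≠ 0 := fun h0 ↦ hxT d <| LinearMap.ext fun t ↦ by
      simpa [g] using LinearMap.congr_fun h0 (e.symm t)
    exact Subtype.ext (eq_of_op_smul_ne_zero c.2 d.2 (hx c) (hx d) (hxT c) hg)
  obtain ⟨c, hc⟩ := Finite.surjective_of_injective hσ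
    ⟨_, isotypicComponent_quotient_jacobson_mem A S⟩
  obtain ⟨h, hh⟩ := exists_linearMap_quotient_jacobson_ne_zero A S
  obtain ⟨e⟩ := nonempty_linearEquiv_of_isotypicComponent_eq hh (congrArg Subtype.val hc).symm
  refine ⟨(T c).subtype ∘ₗ e.toLinearMap, fun h0 ↦ hxT c <| LinearMap.ext fun t ↦ ?_⟩
  have ht : (t : A) = 0 := by simpa using LinearMap.congr_fun h0 (e.symm t)
  simp [ht]

end SelfInjective

/-- The rings `A` here are the left pseudo-Frobenius rings: `IsAtomic (Ideal A)` says that the left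
socle of `A` is essential. -/
theorem hom_simple_is_simple_of_selfinjective_semiprimary_general
    (A : Type u) [Ring A] [IsSemisimpleRing (A ⧸ Ring.jacobson A)] [IsAtomic (Ideal A)]
    [Module.Injective A A] (S : Type v) [AddCommGroup S] [Module A S] [IsSimpleModule A S] :
    IsSimpleModule Aᵐᵒᵖ (S →ₗ[A] A) ∧
    ∀ f : S →ₗ[A] A, f ≠ 0 → Submodule.span Aᵐᵒᵖ {f} = ⊤ := by
  have hsimple : IsSimpleModule Aᵐᵒᵖ (S →ₗ[A] A) := by
    obtain ⟨f, hf⟩ := exists_linearMap_ne_zero_of_isSimpleModule A S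
    refine isSimpleModule_iff_toSpanSingleton_surjective.2 ⟨⟨f, 0, hf⟩, fun f hf g ↦ ?_⟩
    obtain ⟨a, ha⟩ := exists_op_smul_eq_of_injective (LinearMap.injective_of_ne_zero hf) g
    exact ⟨MulOpposite.op a, ha⟩
  exact ⟨hsimple, fun f hf ↦ IsSimpleModule.span_singleton_eq_top _ hf⟩

/-- For a left self-injective semiprimary ring `A` and a simple left `A`-module `S`,
the right `A`-module `Hom_A(S, A)` is simple, and it is generated by any of its
nonzero elements. -/
theorem hom_simple_is_simple_of_selfinjective_semiprimary
    (A : Type u) [Ring A] (hsp : IsSemiprimary A) (hinj : Module.Injective A A)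
    (S : Type v) [AddCommGroup S] [Module A S] (hS : IsSimpleModule A S) :
    IsSimpleModule Aᵐᵒᵖ (S →ₗ[A] A) ∧
    ∀ f : S →ₗ[A] A, f ≠ 0 → Submodule.span Aᵐᵒᵖ {f} = ⊤ := by
  have := hsp.isSemiprimaryRing
  exact hom_simple_is_simple_of_selfinjective_semiprimary_general A S
end

section
/- Let A be a left self-injective semiprimary ring with left socle Σ. Then Σ is semisimple as a right A-module; in particular, the left socle of A is contained in the right socle of A. -/
universe u

open Cardinal

/-- The socle of a module: the sum of all its simple submodules. -/
def socle (R M : Type*) [Ring R] [AddCommGroup M] [Module R M] : Submodule R M :=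
  sSup {N : Submodule R M | IsSimpleModule R N}

/-!
Let `S` be a simple left ideal, `s ∈ S`, and `s * a ≠ 0`. Right multiplication by `a` maps `S`
isomorphically onto the simple left ideal `S * a`; by injectivity the inverse isomorphism
`S * a → S ⊆ A` is right multiplication by some `b`, so `s * a * b = s`. Hence every nonzero
element of `s * A` generates `s * A`, i.e. `s * A` is a simple right ideal.
Every element of the left socle is a sum of such `s`.
-/

section Socle

variable {R M N : Type*} [Ring R] [AddCommGroup M] [Module R M] [AddCommGroup N] [Module R N]

instance isSemisimpleModule_socle : IsSemisimpleModule R (socle R M) := by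
  rw [socle, sSup_eq_iSup]
  exact isSemisimpleModule_biSup_of_isSemisimpleModule_submodule
    fun S (_ : IsSimpleModule R S) ↦ inferInstance

theorem le_socle_iff_isSemisimpleModule {P : Submodule R M} :
    P ≤ socle R M ↔ IsSemisimpleModule R P where
  mp hP := .of_injective (Submodule.inclusion hP) (Submodule.inclusion_injective hP)
  mpr _ := by
    rw [← Submodule.map_subtype_top P, ← IsSemisimpleModule.sSup_simples_eq_top R P,
      Submodule.map_le_iff_le_comap]
    refine sSup_le fun S (_ : IsSimpleModule R S) ↦ Submodule.map_le_iff_le_comap.mp ?_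
    exact le_sSup (IsSimpleModule.congr (P.equivSubtypeMap S).symm)

theorem map_socle_le (f : M →ₗ[R] N) : (socle R M).map f ≤ socle R N := by
  rw [le_socle_iff_isSemisimpleModule]
  exact .of_surjective (f.submoduleMap (socle R M)) (f.submoduleMap_surjective _)

end Socle

section CommutingActions

variable (R E M : Type*) [Ring R] [Ring E] [AddCommGroup M] [Module R M] [Module E M]

/-- The `R`-socle of `M`, regarded as a submodule for an action of `E` commuting with that of `R`.
For `R = M = A` and `E = Aᵐᵒᵖ`, this is the left socle of `A` as a right ideal. -/
def socleOver [SMulCommClass E R M] : Submodule E M where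
  __ := (socle R M).toAddSubmonoid
  smul_mem' e _ hx := map_socle_le (DistribSMul.toLinearMap R M e) (Submodule.mem_map_of_mem hx)

/-- `M` is mininjective over `R`, relative to a second ring `E` acting on `M`, if every `R`-linear
map from a simple submodule of `M` to `M` is given by the action of an element of `E`.
For `R = M = A` and `E = Aᵐᵒᵖ`, this is left mininjectivity of the ring `A`, since the
endomorphisms of the left module `A` are the right multiplications. -/
def IsMininjective : Prop :=
  ∀ (S : Submodule R M) [IsSimpleModule R S] (f : S →ₗ[R] M), ∃ e : E, ∀ s : S, f s = e • (s : M)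

end CommutingActions

namespace IsMininjective

theorem of_injective {A : Type*} [Ring A] (hA : Module.Injective A A) :
    IsMininjective A Aᵐᵒᵖ A := by
  intro S _ f
  obtain ⟨g, hg⟩ := hA.out S.subtype S.subtype_injective f
  refine ⟨MulOpposite.op (g 1), fun s ↦ ?_⟩
  calc f s = g ((s : A) • 1) := by rw [smul_eq_mul, mul_one]; exact (hg s).symm
    _ = MulOpposite.op (g 1) • (s : A) := by rw [map_smul, smul_eq_mul, op_smul_eq_mul]

variable {R E M : Type*} [Ring R] [Ring E] [AddCommGroup M] [Module R M] [Module E M]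
  [SMulCommClass E R M] {S : Submodule R M} [IsSimpleModule R S] {m : M}

theorem exists_smul_smul_eq (h : IsMininjective R E M) (hm : m ∈ S) {e : E} (he : e • m ≠ 0) :
    ∃ e' : E, e' • e • m = m := by
  let f : S →ₗ[R] M := (DistribSMul.toLinearMap R M e).domRestrict S
  have hf : Function.Injective f :=
    LinearMap.injective_of_ne_zero fun hf₀ ↦ he (LinearMap.congr_fun hf₀ ⟨m, hm⟩)
  let φ : S ≃ₗ[R] LinearMap.range f := LinearEquiv.ofInjective f hf
  have : IsSimpleModule R (LinearMap.range f) := .congr φ.symm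
  obtain ⟨e', he'⟩ := h (LinearMap.range f) (S.subtype ∘ₗ φ.symm.toLinearMap)
  refine ⟨e', ?_⟩
  calc e' • e • m = S.subtype (φ.symm (φ ⟨m, hm⟩)) := (he' (φ ⟨m, hm⟩)).symm
    _ = m := by rw [φ.symm_apply_apply, Submodule.subtype_apply]

theorem isSimpleModule_span_singleton (h : IsMininjective R E M) (hm : m ∈ S) (hm₀ : m ≠ 0) :
    IsSimpleModule E (Submodule.span E {m}) := by
  refine isSimpleModule_iff_toSpanSingleton_surjective.mpr
    ⟨Submodule.nontrivial_span_singleton hm₀, ?_⟩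
  rintro ⟨x, hx⟩ hx₀ ⟨y, hy⟩
  obtain ⟨a, rfl⟩ := Submodule.mem_span_singleton.mp hx
  obtain ⟨b, rfl⟩ := Submodule.mem_span_singleton.mp hy
  obtain ⟨c, hc⟩ := h.exists_smul_smul_eq hm fun ha ↦ hx₀ (Subtype.ext ha)
  exact ⟨b * c, Subtype.ext (by simp [mul_smul, hc])⟩

theorem socleOver_le_socle (h : IsMininjective R E M) : socleOver R E M ≤ socle E M := by
  have : SMulCommClass R E M := .symm E R M
  suffices socle R M ≤ socleOver E R M from this
  refine sSup_le fun S (_ : IsSimpleModule R S) m hm ↦ ?_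
  by_cases hm₀ : m = 0
  · exact hm₀ ▸ zero_mem _
  · have hspan : Submodule.span E {m} ≤ socle E M :=
      le_sSup (h.isSimpleModule_span_singleton hm hm₀)
    exact hspan (Submodule.mem_span_singleton_self m)

end IsMininjective

theorem left_socle_right_semisimple_of_selfinjective_semiprimary_general
    {A : Type*} [Ring A] (hA : IsMininjective A Aᵐᵒᵖ A) :
    (∃ Sop : Submodule Aᵐᵒᵖ A,
      (∀ x : A, x ∈ Sop ↔ x ∈ socle A A) ∧ IsSemisimpleModule Aᵐᵒᵖ Sop) ∧
    ∀ x : A, x ∈ socle A A → x ∈ socle Aᵐᵒᵖ A :=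
  have hle : socleOver A Aᵐᵒᵖ A ≤ socle Aᵐᵒᵖ A := hA.socleOver_le_socle
  ⟨⟨socleOver A Aᵐᵒᵖ A, fun _ ↦ Iff.rfl, le_socle_iff_isSemisimpleModule.mp hle⟩,
    fun _ hx ↦ hle hx⟩

/-- For a left self-injective semiprimary ring `A`, the left socle `Σ` of `A` is semisimple
as a right `A`-module: it is a right submodule of `A` which is a semisimple `Aᵐᵒᵖ`-module.
In particular, the left socle is contained in the right socle. -/
theorem left_socle_right_semisimple_of_selfinjective_semiprimary
    (A : Type u) [Ring A] (hsp : IsSemiprimary A) (hinj : Module.Injective A A) :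
    (∃ Sop : Submodule Aᵐᵒᵖ A,
      (∀ x : A, x ∈ Sop ↔ x ∈ socle A A) ∧ IsSemisimpleModule Aᵐᵒᵖ Sop) ∧
    ∀ x : A, x ∈ socle A A → x ∈ socle Aᵐᵒᵖ A := by
  exact left_socle_right_semisimple_of_selfinjective_semiprimary_general (.of_injective hinj)
end
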